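/- Let r and k be positive integers with k > r ≥ 2, G a graph with chromatic number at most r, P ⊆ V(G), and d : P → {1,...,r+k} a proper coloring of G[P]. If |D_G(P,2)| < min{ (k+1)(k+2)/2, (k−r+2)(k+r−1) } and k > (3r−7)/2, then d can be extended to a proper (r+k)-coloring of G (using no new colors beyond those available to d). -/

import Mathlib

/-- The set of unordered pairs of distinct vertices of `P` at distance at most `m` in `G`. -/
def pairsAtMost {V : Type*} (G : SimpleGraph V) (P : Set V) (m : ℕ) : Set (Sym2 V) :=
  {e | ∃ x y, e = s(x, y) ∧ x ∈ P ∧ y ∈ P ∧ x ≠ y ∧ ∃ p : G.Walk x y, p.length ≤ m}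

/-!
Give each of the `r` classes of a proper `r`-colouring of `G` its own pair of the `r + k` colours,
the pairs being disjoint. A vertex outside `P` can use a colour of its pair unless it sees both of
them on `P`, and then two vertices of `P` at distance at most two are coloured with that pair. Let
the weight of a pair of colours be the number of such close pairs. If all pairs have weight `0`,
the colouring extends. One pair of weight `1` is harmless too: assign it to the class of a vertex
of its only close pair, for then nothing in that class is adjacent to that vertex.

So it suffices to find `r - 1` disjoint pairs of weight `0` and one more of weight at most `1`.
Start from a matching of weight-`0` pairs and take a maximal set `U` of half-edges, at most one on
each edge, satisfying Hall's condition with excess two towards the set `T` of colours missed by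
the matching or matched to `U`. Then `U` can be rematched so as to miss any two given colours of
`T`, and every colour on an edge not met by `U` has at most one weight-`0` pair into `T`. If no
pair missed by a matching of this size were light enough to be added, the pairs inside `T` and the
pairs between `T` and the remaining edges would together weigh more than the hypothesis allows.
-/

open Function Finset

section Matching

variable {ι C : Type*} {H : SimpleGraph C} {e : ι ⊕ ι → C}

/-- A matching of `H` whose edges are indexed by `ι`. The elements of `ι ⊕ ι` are the half-edges:
the edge `i` joins `e (inl i)` and `e (inr i)`, so `Sum.swap` sends a half-edge to the other end of
its edge. -/
structure IsIndexedMatching (H : SimpleGraph C) (e : ι ⊕ ι → C) : Prop where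
  injective : Injective e
  adj_swap : ∀ z, H.Adj (e z) (e z.swap)

theorem isIndexedMatching_of_isEmpty [IsEmpty ι] : IsIndexedMatching H e :=
  ⟨injective_of_subsingleton e, isEmptyElim⟩

/-- The indexed family of pairs `e` with the pair `(a, b)` prepended at index `0`. -/
def consPair {n : ℕ} (a b : C) (e : Fin n ⊕ Fin n → C) : Fin (n + 1) ⊕ Fin (n + 1) → C :=
  Sum.elim (Fin.cons a (e ∘ Sum.inl)) (Fin.cons b (e ∘ Sum.inr))

theorem consPair_injective {n : ℕ} {a b : C} {e : Fin n ⊕ Fin n → C} (he : Injective e)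
    (hab : a ≠ b) (hmiss : ∀ z, e z ≠ a ∧ e z ≠ b) : Injective (consPair a b e) := by
  refine Injective.sumElim
    (Fin.cons_injective_iff.2 ⟨?_, he.comp Sum.inl_injective⟩)
    (Fin.cons_injective_iff.2 ⟨?_, he.comp Sum.inr_injective⟩) ?_
  · rintro ⟨i, hi⟩
    exact (hmiss _).1 hi
  · rintro ⟨i, hi⟩
    exact (hmiss _).2 hi
  · intro i j
    cases i using Fin.cases <;> cases j using Fin.cases
    · exact hab
    · exact (hmiss _).1.symm
    · exact (hmiss _).2
    · exact he.ne Sum.inl_ne_inr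

theorem isIndexedMatching_consPair {n : ℕ} {a b : C} {e : Fin n ⊕ Fin n → C}
    (he : IsIndexedMatching H e) (hab : H.Adj a b) (hmiss : ∀ z, e z ≠ a ∧ e z ≠ b) :
    IsIndexedMatching H (consPair a b e) := by
  refine ⟨consPair_injective he.injective hab.ne hmiss, ?_⟩
  rintro (i | i) <;> cases i using Fin.cases
  · exact hab
  · exact he.adj_swap (Sum.inl _)
  · exact hab.symm
  · exact he.adj_swap (Sum.inr _)

variable [Fintype ι] [DecidableEq ι] [Fintype C] [DecidableEq C] {U : Finset (ι ⊕ ι)}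

/-- The vertices that are left uncovered when every half-edge of `U` lets go of its partner: those
missed by the matching `e` and the partners of `U`. -/
def exposed (e : ι ⊕ ι → C) (U : Finset (ι ⊕ ι)) : Finset C :=
  (image e {z | z.swap ∉ U})ᶜ

theorem card_filter_swap_mem : #{z | Sum.swap z ∈ U} = #U :=
  card_equiv (Equiv.sumComm ι ι) (by simp)

theorem mem_exposed {t : C} : t ∈ exposed e U ↔ ∀ z, e z = t → z.swap ∈ U := by
  simp only [exposed, mem_compl, mem_image, mem_filter_univ, not_exists, not_and, not_imp_not]

theorem notMem_exposed {z : ι ⊕ ι} (hz : z.swap ∉ U) : e z ∉ exposed e U :=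
  fun h ↦ hz (mem_exposed.1 h z rfl)

theorem exposed_insert (he : Injective e) (z : ι ⊕ ι) :
    exposed e (insert z U) = insert (e z.swap) (exposed e U) := by
  ext t
  simp only [mem_exposed, mem_insert]
  constructor
  · intro h
    by_cases ht : t = e z.swap
    · exact .inl ht
    · refine .inr fun y hy ↦ (h y hy).resolve_left ?_
      rintro rfl
      exact ht (by simp [← hy])
  · rintro (rfl | h) y hy
    · exact .inl (by simp [he hy])
    · exact .inr (h y hy)

theorem card_exposed_add (he : Injective e) :
    #(exposed e U) + 2 * Fintype.card ι = Fintype.card C + #U := by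
  have hkept := card_filter_add_card_filter_not (s := univ) (fun z : ι ⊕ ι ↦ z.swap ∈ U)
  have hC := card_add_card_compl (image e {z | z.swap ∉ U})
  rw [card_filter_swap_mem, card_univ, Fintype.card_sum] at hkept
  rw [card_image_of_injective _ he] at hC
  rw [exposed]
  omega

/-- The half-edges on edges of the matching that `U` does not meet. -/
def looseHalfEdges (U : Finset (ι ⊕ ι)) : Finset (ι ⊕ ι) :=
  {z | z ∉ U ∧ z.swap ∉ U}

theorem mem_looseHalfEdges {z : ι ⊕ ι} : z ∈ looseHalfEdges U ↔ z ∉ U ∧ z.swap ∉ U := by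
  simp [looseHalfEdges]

theorem swap_mem_looseHalfEdges {z : ι ⊕ ι} (hz : z ∈ looseHalfEdges U) :
    z.swap ∈ looseHalfEdges U := by
  rw [mem_looseHalfEdges] at *
  simpa using hz.symm

theorem swap_notMem_insert (hU : ∀ y ∈ U, y.swap ∉ U) {z : ι ⊕ ι}
    (hz : z ∈ looseHalfEdges U) : ∀ y ∈ insert z U, y.swap ∉ insert z U := by
  obtain ⟨hzU, hzU'⟩ := mem_looseHalfEdges.1 hz
  have hne : z.swap ≠ z := by cases z <;> simp
  intro y hy
  rcases mem_insert.1 hy with rfl | hyU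
  · simp [hne, hzU']
  · have hyz : y.swap ≠ z := by
      rintro rfl
      exact hzU' (by simpa using hyU)
    simp [hyz, hU y hyU]

theorem card_looseHalfEdges_add (hU : ∀ z ∈ U, z.swap ∉ U) :
    #(looseHalfEdges U) + 2 * #U = 2 * Fintype.card ι := by
  let partners : Finset (ι ⊕ ι) := {z | z.swap ∈ U}
  have hdisj : Disjoint U partners :=
    Finset.disjoint_left.2 fun z hz ↦ by simpa [partners] using hU z hz
  have hcompl : looseHalfEdges U = (U ∪ partners)ᶜ := by
    ext z
    simp [mem_looseHalfEdges, partners]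
  have hcard := card_add_card_compl (U ∪ partners)
  rw [← hcompl, card_union_of_disjoint hdisj, card_filter_swap_mem, Fintype.card_sum] at hcard
  omega

/-- The family `e` after every half-edge `u` of `U` has traded its partner for `φ u`. -/
def reroute (e : ι ⊕ ι → C) (φ : U → C) (z : ι ⊕ ι) : C :=
  if h : z.swap ∈ U then φ ⟨z.swap, h⟩ else e z

theorem isIndexedMatching_reroute (he : IsIndexedMatching H e) (hU : ∀ z ∈ U, z.swap ∉ U)
    {φ : U → C} (hφ : Injective φ) (hexp : ∀ u, φ u ∈ exposed e U)
    (hadj : ∀ u : U, H.Adj (e u) (φ u)) : IsIndexedMatching H (reroute e φ) := by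
  have hne (u : U) {z : ι ⊕ ι} (hz : z.swap ∉ U) : φ u ≠ e z :=
    fun h ↦ notMem_exposed hz (h ▸ hexp u)
  constructor
  · intro y z hyz
    by_cases hy : y.swap ∈ U <;> by_cases hz : z.swap ∈ U <;>
      simp only [reroute, hy, hz, dif_pos, dif_neg, not_false_eq_true] at hyz
    · exact (Equiv.sumComm ι ι).injective (congrArg Subtype.val (hφ hyz))
    · exact absurd hyz (hne _ hz)
    · exact absurd hyz.symm (hne _ hy)
    · exact he.injective hyz
  · intro z
    by_cases hz : z ∈ U
    · simpa [reroute, hz, hU z hz] using hadj ⟨z, hz⟩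
    · by_cases hz' : z.swap ∈ U
      · simpa [reroute, hz, hz'] using (hadj ⟨z.swap, hz'⟩).symm
      · simpa [reroute, hz, hz'] using he.adj_swap z

variable [DecidableRel H.Adj]

/-- The neighbours of the end `e z` among the vertices exposed by `U`. -/
def exposedNeighbors (H : SimpleGraph C) [DecidableRel H.Adj] (e : ι ⊕ ι → C)
    (U : Finset (ι ⊕ ι)) (z : ι ⊕ ι) : Finset C :=
  {t ∈ exposed e U | H.Adj (e z) t}

theorem exists_isIndexedMatching_avoiding (he : IsIndexedMatching H e)
    (hU : ∀ z ∈ U, z.swap ∉ U) {X : Finset C} (hX : X ⊆ exposed e U)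
    (hall : ∀ S ⊆ U, #S ≤ #(S.biUnion (exposedNeighbors H e U) \ X)) :
    ∃ e' : ι ⊕ ι → C, IsIndexedMatching H e' ∧ ∀ z, e' z ∉ X := by
  obtain ⟨φ, hφ, hmem⟩ := (all_card_le_biUnion_card_iff_exists_injective
    fun u : U ↦ exposedNeighbors H e U u \ X).1 fun S ↦ by
      have hS := hall (S.map (.subtype _)) (by simp +contextual [subset_iff])
      rw [card_map] at hS
      convert hS using 2
      ext
      simp only [mem_biUnion, mem_sdiff, mem_map, Embedding.subtype_apply]
      grind
  simp only [exposedNeighbors, mem_sdiff, mem_filter] at hmem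
  refine ⟨reroute e φ, isIndexedMatching_reroute he hU hφ (fun u ↦ (hmem u).1.1)
    (fun u ↦ (hmem u).1.2), ?_⟩
  intro z
  by_cases hz : z.swap ∈ U
  · simpa only [reroute, hz, dif_pos] using (hmem ⟨z.swap, hz⟩).2
  · simpa only [reroute, hz, dif_neg, not_false_eq_true] using fun h ↦ notMem_exposed hz (hX h)

theorem biUnion_exposedNeighbors_subset_insert (he : Injective e) (z : ι ⊕ ι)
    (S : Finset (ι ⊕ ι)) :
    S.biUnion (exposedNeighbors H e U) ⊆ S.biUnion (exposedNeighbors H e (insert z U)) :=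
  biUnion_mono fun y _ ↦ filter_subset_filter (H.Adj (e y)) <| by
    rw [exposed_insert he]
    exact subset_insert _ _

theorem partner_notMem_biUnion_exposedNeighbors {z : ι ⊕ ι} (hz : z ∉ U)
    (S : Finset (ι ⊕ ι)) : e z.swap ∉ S.biUnion (exposedNeighbors H e U) := by
  have hpartner : e z.swap ∉ exposed e U := notMem_exposed (by rwa [Sum.swap_swap])
  simp [exposedNeighbors, hpartner]

/-- The Hall condition with excess two for matching `U` into the vertices it exposes: this is what
allows `U` to be rematched so as to leave any two prescribed exposed vertices uncovered. -/
structure HasSurplusTwo (H : SimpleGraph C) [DecidableRel H.Adj] (e : ι ⊕ ι → C)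
    (U : Finset (ι ⊕ ι)) : Prop where
  swap_notMem : ∀ z ∈ U, z.swap ∉ U
  card_add_two_le : ∀ S ⊆ U, S.Nonempty → #S + 2 ≤ #(S.biUnion (exposedNeighbors H e U))

theorem hasSurplusTwo_empty : HasSurplusTwo H e ∅ :=
  ⟨by simp, fun S hS hne ↦ by simp [subset_empty.1 hS] at hne⟩

namespace HasSurplusTwo

theorem card_add_one_le (h : HasSurplusTwo H e U) {z : ι ⊕ ι} {S : Finset (ι ⊕ ι)}
    (hS : S ⊆ insert z U) (hz : z ∈ S) (hne : S ≠ {z}) :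
    #S + 1 ≤ #(S.biUnion (exposedNeighbors H e U)) := by
  have herase : (S.erase z).Nonempty := by
    rw [nonempty_iff_ne_empty, Ne, erase_eq_empty_iff]
    exact not_or.2 ⟨ne_empty_of_mem hz, hne⟩
  have hsurplus := h.card_add_two_le (S.erase z) (subset_insert_iff.1 hS) herase
  have hmono := card_le_card
    (biUnion_subset_biUnion_of_subset_left (exposedNeighbors H e U) (erase_subset z S))
  have hcard := card_erase_add_one hz
  omega

theorem insert_loose (h : HasSurplusTwo H e U) (he : IsIndexedMatching H e) {z : ι ⊕ ι}
    (hz : z ∈ looseHalfEdges U) (hnbr : 2 ≤ #(exposedNeighbors H e U z)) :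
    HasSurplusTwo H e (insert z U) := by
  refine ⟨swap_notMem_insert h.swap_notMem hz, fun S hS hne ↦ ?_⟩
  have hmono := biUnion_exposedNeighbors_subset_insert (H := H) (U := U) he.injective z S
  by_cases hzS : z ∈ S
  · have hpartner : e z.swap ∈ S.biUnion (exposedNeighbors H e (insert z U)) :=
      mem_biUnion.2 ⟨z, hzS, by
        simp [exposedNeighbors, exposed_insert he.injective, he.adj_swap]⟩
    have hlt := card_lt_card <| (ssubset_iff_of_subset hmono).2 ⟨e z.swap, hpartner,
      partner_notMem_biUnion_exposedNeighbors (mem_looseHalfEdges.1 hz).1 S⟩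
    suffices #S + 1 ≤ #(S.biUnion (exposedNeighbors H e U)) by omega
    by_cases hS' : S = {z}
    · simpa [hS'] using hnbr
    · exact h.card_add_one_le hS hzS hS'
  · exact (h.card_add_two_le S ((subset_insert_iff_of_notMem hzS).1 hS) hne).trans
      (card_le_card hmono)

theorem exists_closed (he : IsIndexedMatching H e) :
    ∃ U, HasSurplusTwo H e U ∧ ∀ z ∈ looseHalfEdges U, #(exposedNeighbors H e U z) ≤ 1 := by
  obtain ⟨U, hU, hmax⟩ := (Set.toFinite {U | HasSurplusTwo H e U}).exists_maximal
    ⟨∅, hasSurplusTwo_empty⟩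
  refine ⟨U, hU, fun z hz ↦ not_lt.1 fun hnbr ↦ ?_⟩
  have hle := hmax (hU.insert_loose he hz hnbr) (subset_insert z U)
  exact (mem_looseHalfEdges.1 hz).1 (hle (mem_insert_self z U))

theorem card_le_card_biUnion_sdiff_pair (h : HasSurplusTwo H e U) {S : Finset (ι ⊕ ι)}
    (hS : S ⊆ U) (a b : C) : #S ≤ #(S.biUnion (exposedNeighbors H e U) \ {a, b}) := by
  rcases S.eq_empty_or_nonempty with rfl | hne
  · simp
  · have hsurplus := h.card_add_two_le S hS hne
    have hpair : #{a, b} ≤ 2 := card_le_two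
    have hsdiff := le_card_sdiff {a, b} (S.biUnion (exposedNeighbors H e U))
    omega

theorem exists_avoiding (h : HasSurplusTwo H e U) (he : IsIndexedMatching H e) {a b : C}
    (ha : a ∈ exposed e U) (hb : b ∈ exposed e U) :
    ∃ e' : ι ⊕ ι → C, IsIndexedMatching H e' ∧ ∀ z, e' z ≠ a ∧ e' z ≠ b := by
  obtain ⟨e', he', havoid⟩ := exists_isIndexedMatching_avoiding he h.swap_notMem
    (insert_subset ha (singleton_subset_iff.2 hb))
    fun _ hS ↦ h.card_le_card_biUnion_sdiff_pair hS a b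
  exact ⟨e', he', fun z ↦ by simpa using havoid z⟩

theorem exists_avoiding_partner (h : HasSurplusTwo H e U) (he : IsIndexedMatching H e)
    {z : ι ⊕ ι} (hz : z ∈ looseHalfEdges U) {a b : C} (ha : a ∈ exposedNeighbors H e U z)
    (hb : b ∈ exposed e U) (hba : b ≠ a) :
    ∃ e' : ι ⊕ ι → C, IsIndexedMatching H e' ∧ ∀ y, e' y ≠ e z.swap ∧ e' y ≠ b := by
  suffices ∃ e' : ι ⊕ ι → C, IsIndexedMatching H e' ∧ ∀ y, e' y ∉ ({e z.swap, b} : Finset C) by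
    simpa only [mem_insert, mem_singleton, not_or] using this
  refine exists_isIndexedMatching_avoiding he (swap_notMem_insert h.swap_notMem hz)
    (by simp [insert_subset_iff, exposed_insert he.injective, hb]) fun S hS ↦ ?_
  refine le_trans ?_ (card_le_card (sdiff_subset_sdiff
    (biUnion_exposedNeighbors_subset_insert he.injective z S) subset_rfl))
  by_cases hzS : z ∈ S
  · rw [sdiff_insert_of_notMem
      (partner_notMem_biUnion_exposedNeighbors (mem_looseHalfEdges.1 hz).1 S)]
    by_cases hS' : S = {z}
    · rw [hS', card_singleton, singleton_biUnion, one_le_card]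
      exact ⟨a, by simp [ha, hba.symm]⟩
    · have hsurplus := h.card_add_one_le hS hzS hS'
      have hsdiff := le_card_sdiff {b} (S.biUnion (exposedNeighbors H e U))
      rw [card_singleton] at hsdiff
      omega
  · exact h.card_le_card_biUnion_sdiff_pair ((subset_insert_iff_of_notMem hzS).1 hS) _ _

end HasSurplusTwo

end Matching

section Weight

variable {ι C : Type*} {W : Sym2 C → ℕ} {e : ι ⊕ ι → C}

theorem card_mul_pred_mul_add_two_mul_sum_le [Fintype C] {T R : Finset C}
    (hTR : Disjoint T R) {q : ℕ} (hq : ∀ a ∈ T, ∀ b ∈ T, a ≠ b → q ≤ W s(a, b)) :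
    #T * (#T - 1) * q + 2 * ∑ x ∈ R, ∑ t ∈ T, W s(x, t) ≤ 2 * ∑ p, W p := by
  classical
  let inner := T.offDiag.image Sym2.mk.uncurry
  let cross := (R ×ˢ T).image Sym2.mk.uncurry
  have hdisj : Disjoint inner cross := by
    simp only [inner, cross, Finset.disjoint_left, mem_image, mem_offDiag, mem_product,
      Prod.exists, uncurry_apply_pair]
    rintro _ ⟨a, b, ⟨ha, hb, -⟩, rfl⟩ ⟨x, t, ⟨hx, -⟩, hxt⟩
    rcases Sym2.eq_iff.1 hxt with ⟨rfl, -⟩ | ⟨rfl, -⟩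
    · exact Finset.disjoint_left.1 hTR ha hx
    · exact Finset.disjoint_left.1 hTR hb hx
  have hinner : #T * (#T - 1) * q ≤ 2 * ∑ p ∈ inner, W p := by
    calc #T * (#T - 1) * q = 2 * (#inner * q) := by
          rw [← mul_assoc, Sym2.two_mul_card_image_offDiag, offDiag_card, Nat.mul_sub_one]
      _ ≤ 2 * ∑ p ∈ inner, W p := by
          gcongr
          refine card_nsmul_le_sum inner W q ?_
          simp only [inner, mem_image, mem_offDiag, Prod.exists, uncurry_apply_pair]
          rintro _ ⟨a, b, ⟨ha, hb, hab⟩, rfl⟩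
          exact hq a ha b hb hab
  have hcross : ∑ p ∈ cross, W p = ∑ x ∈ R, ∑ t ∈ T, W s(x, t) := by
    rw [sum_image, sum_product]
    · rfl
    · rintro ⟨x, t⟩ hxt ⟨x', t'⟩ hxt' heq
      simp only [coe_product, Set.mem_prod, mem_coe] at hxt hxt'
      rcases Sym2.eq_iff.1 heq with ⟨rfl, rfl⟩ | ⟨rfl, rfl⟩
      · rfl
      · exact absurd hxt.1 (Finset.disjoint_left.1 hTR hxt'.2)
  have htotal : ∑ p ∈ inner, W p + ∑ p ∈ cross, W p ≤ ∑ p, W p := by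
    rw [← sum_union hdisj]
    exact sum_le_sum_of_subset (subset_univ _)
  omega

/-- The graph of the pairs of distinct elements that have weight `0`. -/
def zeroGraph (W : Sym2 C → ℕ) : SimpleGraph C :=
  .fromEdgeSet {p | W p = 0}

theorem zeroGraph_adj {a b : C} :
    (zeroGraph W).Adj a b ↔ W s(a, b) = 0 ∧ a ≠ b :=
  SimpleGraph.fromEdgeSet_adj _

instance [DecidableEq C] (W : Sym2 C → ℕ) : DecidableRel (zeroGraph W).Adj :=
  fun _ _ ↦ decidable_of_iff' _ zeroGraph_adj

/-- Every pair of distinct elements missed by some `ι`-indexed matching of weight-`0` pairs has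
weight at least `q`. For `q = 1` this says that the `ι`-indexed matchings are maximum. -/
def MissedPairsHeavy (ι : Type*) (W : Sym2 C → ℕ) (q : ℕ) : Prop :=
  ∀ e : ι ⊕ ι → C, IsIndexedMatching (zeroGraph W) e →
    ∀ a b, a ≠ b → (∀ z, e z ≠ a ∧ e z ≠ b) → q ≤ W s(a, b)

theorem exists_lt_of_not_missedPairsHeavy {q : ℕ} (h : ¬ MissedPairsHeavy ι W q) :
    ∃ e : ι ⊕ ι → C, IsIndexedMatching (zeroGraph W) e ∧
      ∃ a b, a ≠ b ∧ (∀ z, e z ≠ a ∧ e z ≠ b) ∧ W s(a, b) < q := by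
  simpa only [MissedPairsHeavy, not_forall, not_le, exists_prop] using h

section Exposed

variable [Fintype ι] [Fintype C] [DecidableEq ι] [DecidableEq C] {U : Finset (ι ⊕ ι)}

/-- The total weight of the pairs joining the end `e z` to the vertices exposed by `U`. -/
def exposedWeight (W : Sym2 C → ℕ) (e : ι ⊕ ι → C) (U : Finset (ι ⊕ ι)) (z : ι ⊕ ι) : ℕ :=
  ∑ t ∈ exposed e U, W s(e z, t)

theorem card_exposed_le_exposedWeight_add {z : ι ⊕ ι} (hz : z ∈ looseHalfEdges U) :
    #(exposed e U) ≤ exposedWeight W e U z + #(exposedNeighbors (zeroGraph W) e U z) := by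
  have hne : ∀ t ∈ exposed e U, e z ≠ t := by
    rintro t ht rfl
    exact notMem_exposed (mem_looseHalfEdges.1 hz).2 ht
  calc #(exposed e U) = ∑ t ∈ exposed e U, 1 := card_eq_sum_ones _
    _ ≤ ∑ t ∈ exposed e U, (W s(e z, t) + if (zeroGraph W).Adj (e z) t then 1 else 0) := by
        refine sum_le_sum fun t ht ↦ ?_
        split_ifs with hadj
        · omega
        · have := mt (fun h0 ↦ zeroGraph_adj.2 ⟨h0, hne t ht⟩) hadj
          omega
    _ = _ := by rw [sum_add_distrib, exposedWeight, exposedNeighbors, card_filter]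

theorem HasSurplusTwo.weight_bound (h : HasSurplusTwo (zeroGraph W) e U)
    (he : IsIndexedMatching (zeroGraph W) e) {q : ℕ} (hq : MissedPairsHeavy ι W q) :
    #(exposed e U) * (#(exposed e U) - 1) * q +
      2 * ∑ z ∈ looseHalfEdges U, exposedWeight W e U z ≤ 2 * ∑ p, W p := by
  have hdisj : Disjoint (exposed e U) ((looseHalfEdges U).image e) := by
    rw [disjoint_right]
    intro t ht
    obtain ⟨z, hz, rfl⟩ := mem_image.1 ht
    exact notMem_exposed (mem_looseHalfEdges.1 hz).2
  have hbound := card_mul_pred_mul_add_two_mul_sum_le hdisj (W := W) (q := q)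
    fun a ha b hb hab ↦ by
      obtain ⟨e', he', hmiss⟩ := h.exists_avoiding he ha hb
      exact hq e' he' a b hab hmiss
  rwa [sum_image he.injective.injOn] at hbound

theorem HasSurplusTwo.two_mul_card_exposed_le_of_mem
    (h : HasSurplusTwo (zeroGraph W) e U) (he : IsIndexedMatching (zeroGraph W) e)
    (hclosed : ∀ z ∈ looseHalfEdges U, #(exposedNeighbors (zeroGraph W) e U z) ≤ 1)
    (hq : MissedPairsHeavy ι W 2) (hU : 3 ≤ #(exposed e U)) {z : ι ⊕ ι}
    (hz : z ∈ looseHalfEdges U) {a : C} (ha : a ∈ exposedNeighbors (zeroGraph W) e U z) :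
    2 * #(exposed e U) ≤ exposedWeight W e U z + exposedWeight W e U z.swap := by
  have hone := card_exposed_le_exposedWeight_add (W := W) (e := e) hz
  have hone' := hclosed z hz
  have hswap : #((exposed e U).erase a) * 2 ≤ exposedWeight W e U z.swap := by
    refine (card_nsmul_le_sum _ (fun b ↦ W s(e z.swap, b)) 2 fun b hb ↦ ?_).trans
      (sum_le_sum_of_subset (erase_subset a _))
    obtain ⟨hba, hb⟩ := mem_erase.1 hb
    obtain ⟨e', he', hmiss⟩ := h.exists_avoiding_partner he hz ha hb hba
    refine hq e' he' _ b ?_ hmiss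
    rintro rfl
    exact notMem_exposed (mem_looseHalfEdges.1 (swap_mem_looseHalfEdges hz)).2 hb
  have herase := pred_card_le_card_erase (s := exposed e U) (a := a)
  omega

theorem HasSurplusTwo.two_mul_card_exposed_le
    (h : HasSurplusTwo (zeroGraph W) e U) (he : IsIndexedMatching (zeroGraph W) e)
    (hclosed : ∀ z ∈ looseHalfEdges U, #(exposedNeighbors (zeroGraph W) e U z) ≤ 1)
    (hq : MissedPairsHeavy ι W 2) (hU : 3 ≤ #(exposed e U)) {z : ι ⊕ ι}
    (hz : z ∈ looseHalfEdges U) :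
    2 * #(exposed e U) ≤ exposedWeight W e U z + exposedWeight W e U z.swap := by
  have hz' := swap_mem_looseHalfEdges hz
  rcases (exposedNeighbors (zeroGraph W) e U z).eq_empty_or_nonempty with hempty | ⟨a, ha⟩
  · rcases (exposedNeighbors (zeroGraph W) e U z.swap).eq_empty_or_nonempty with
      hempty' | ⟨a, ha⟩
    · have hle := card_exposed_le_exposedWeight_add (W := W) (e := e) hz
      have hle' := card_exposed_le_exposedWeight_add (W := W) (e := e) hz'
      rw [hempty, card_empty] at hle
      rw [hempty', card_empty] at hle'
      omega
    · have hle := h.two_mul_card_exposed_le_of_mem he hclosed hq hU hz' ha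
      rw [Sum.swap_swap] at hle
      omega
  · exact h.two_mul_card_exposed_le_of_mem he hclosed hq hU hz ha

theorem card_mul_le_sum_looseHalfEdges {f : ι ⊕ ι → ℕ} {c : ℕ}
    (hf : ∀ z ∈ looseHalfEdges U, 2 * c ≤ f z + f z.swap) :
    #(looseHalfEdges U) * c ≤ ∑ z ∈ looseHalfEdges U, f z := by
  have hswap : ∑ z ∈ looseHalfEdges U, f z.swap = ∑ z ∈ looseHalfEdges U, f z :=
    sum_equiv (Equiv.sumComm ι ι)
      (fun z ↦ ⟨swap_mem_looseHalfEdges, fun hz ↦ by simpa using swap_mem_looseHalfEdges hz⟩)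
      fun _ _ ↦ rfl
  have hsum := card_nsmul_le_sum _ _ _ hf
  rw [sum_add_distrib, hswap, smul_eq_mul, mul_left_comm] at hsum
  omega

end Exposed

theorem MissedPairsHeavy.exists_weight_bound_one [Fintype ι] [Fintype C]
    (hq : MissedPairsHeavy ι W 1) (he : IsIndexedMatching (zeroGraph W) e) :
    ∃ u p τ, u + p = Fintype.card ι ∧ τ + 2 * Fintype.card ι = Fintype.card C + u ∧
      τ * (τ - 1) + 4 * p * (τ - 1) ≤ 2 * ∑ x, W x := by
  classical
  obtain ⟨U, hU, hclosed⟩ := HasSurplusTwo.exists_closed he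
  have hloose := card_looseHalfEdges_add hU.swap_notMem
  have hbound := hU.weight_bound he hq
  have hsum : #(looseHalfEdges U) * (#(exposed e U) - 1) ≤
      ∑ z ∈ looseHalfEdges U, exposedWeight W e U z :=
    card_nsmul_le_sum _ _ _ fun z hz ↦ by
      have hle := card_exposed_le_exposedWeight_add (W := W) (e := e) hz
      have hone := hclosed z hz
      omega
  refine ⟨#U, Fintype.card ι - #U, #(exposed e U), by omega, card_exposed_add he.injective, ?_⟩
  have hrest : #(looseHalfEdges U) = 2 * (Fintype.card ι - #U) := by omega
  rw [hrest] at hsum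
  linarith

theorem MissedPairsHeavy.exists_weight_bound_two [Fintype ι] [Fintype C]
    (hq : MissedPairsHeavy ι W 2) (he : IsIndexedMatching (zeroGraph W) e)
    (hcard : 2 * Fintype.card ι + 3 ≤ Fintype.card C) :
    ∃ u p τ, u + p = Fintype.card ι ∧ τ + 2 * Fintype.card ι = Fintype.card C + u ∧
      τ * (τ - 1) + 2 * p * τ ≤ ∑ x, W x := by
  classical
  obtain ⟨U, hU, hclosed⟩ := HasSurplusTwo.exists_closed he
  have hloose := card_looseHalfEdges_add hU.swap_notMem
  have hexposed := card_exposed_add (U := U) he.injective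
  have hbound := hU.weight_bound he hq
  have hsum := card_mul_le_sum_looseHalfEdges (f := exposedWeight W e U) fun z hz ↦
    hU.two_mul_card_exposed_le he hclosed hq (by omega) hz
  refine ⟨#U, Fintype.card ι - #U, #(exposed e U), by omega, hexposed, ?_⟩
  have hrest : #(looseHalfEdges U) = 2 * (Fintype.card ι - #U) := by omega
  rw [hrest] at hsum
  linarith

theorem succ_mul_add_two_le_of_add_two_le {r k u p τ : ℕ} (hk : 3 * r < 2 * k + 7)
    (hr : u + p + 2 ≤ r) (hτ : τ + 2 * (u + p) = r + k + u) :
    (k + 1) * (k + 2) ≤ τ * (τ - 1) + 4 * p * (τ - 1) := by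
  obtain ⟨j, rfl⟩ := Nat.exists_eq_add_of_le hr
  obtain ⟨t, rfl⟩ : ∃ t, τ = t + 1 := ⟨τ - 1, by omega⟩
  rw [Nat.add_sub_cancel]
  zify at *
  have ht : (t : ℤ) = k + 1 + j - p := by linarith
  have hp : (0 : ℤ) ≤ p * (2 * k + 1 + 2 * j - 3 * p) := mul_nonneg (by positivity) (by linarith)
  have hj : (0 : ℤ) ≤ j * (2 * k + 3 + j) := by positivity
  rw [ht]
  linarith

theorem sub_add_two_mul_le_of_add_one_eq {r k u p τ : ℕ} (hk : r < k) (hr : u + p + 1 = r)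
    (hτ : τ + 2 * (u + p) = r + k + u) :
    (k - r + 2) * (k + r - 1) ≤ τ * (τ - 1) + 2 * p * τ := by
  obtain ⟨j, rfl⟩ := Nat.exists_eq_add_of_lt hk
  obtain rfl : τ = u + j + 3 := by omega
  rw [show r + j + 1 - r + 2 = j + 3 by omega,
    show r + j + 1 + r - 1 = 2 * u + 2 * p + 2 + j by omega,
    show u + j + 3 - 1 = u + j + 2 by omega]
  nlinarith [Nat.le_mul_self u]

theorem exists_isIndexedMatching_fin [Fintype C] {r k : ℕ} (hk : 3 * r < 2 * k + 7)
    (hC : Fintype.card C = r + k) (hW : 2 * ∑ p, W p < (k + 1) * (k + 2)) {n : ℕ} (hn : n < r) :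
    ∃ e : Fin n ⊕ Fin n → C, IsIndexedMatching (zeroGraph W) e := by
  induction n with
  | zero => exact ⟨isEmptyElim, isIndexedMatching_of_isEmpty⟩
  | succ n ih =>
    obtain ⟨e, he⟩ := ih (by omega)
    have hlight : ¬ MissedPairsHeavy (Fin n) W 1 := by
      intro hheavy
      obtain ⟨u, p, τ, hup, hτ, hle⟩ := hheavy.exists_weight_bound_one he
      rw [Fintype.card_fin] at hup hτ
      rw [hC, ← hup] at hτ
      exact hW.not_ge ((succ_mul_add_two_le_of_add_two_le hk (by omega) hτ).trans hle)
    obtain ⟨e', he', a, b, hab, hmiss, hzero⟩ := exists_lt_of_not_missedPairsHeavy hlight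
    exact ⟨consPair a b e', isIndexedMatching_consPair he'
      (zeroGraph_adj.2 ⟨Nat.lt_one_iff.1 hzero, hab⟩) hmiss⟩

theorem exists_injective_pairs_weight_le_one [Fintype C] {m k : ℕ} (hk : m + 1 < k)
    (hk' : 3 * (m + 1) < 2 * k + 7) (hC : Fintype.card C = m + 1 + k)
    (hW : 2 * ∑ p, W p < min ((k + 1) * (k + 2)) (2 * ((k - (m + 1) + 2) * (k + (m + 1) - 1)))) :
    ∃ e : Fin (m + 1) ⊕ Fin (m + 1) → C, Injective e ∧
      (∀ i ≠ 0, W s(e (.inl i), e (.inr i)) = 0) ∧ W s(e (.inl 0), e (.inr 0)) ≤ 1 := by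
  obtain ⟨hW₁, hW₂⟩ := lt_min_iff.1 hW
  obtain ⟨e, he⟩ := exists_isIndexedMatching_fin hk' hC hW₁ m.lt_succ_self
  have hlight : ¬ MissedPairsHeavy (Fin m) W 2 := by
    intro hheavy
    obtain ⟨u, p, τ, hup, hτ, hle⟩ :=
      hheavy.exists_weight_bound_two he (by rw [Fintype.card_fin]; omega)
    rw [Fintype.card_fin] at hup hτ
    have hge := sub_add_two_mul_le_of_add_one_eq (u := u) (p := p) (τ := τ) hk (by omega) (by omega)
    omega
  obtain ⟨e', he', a, b, hab, hmiss, hlt⟩ := exists_lt_of_not_missedPairsHeavy hlight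
  refine ⟨consPair a b e', consPair_injective he'.injective hab hmiss, fun i hi ↦ ?_,
    Nat.lt_succ_iff.1 hlt⟩
  obtain ⟨j, rfl⟩ := Fin.exists_succ_eq.2 hi
  exact (zeroGraph_adj.1 (he'.adj_swap (.inl j))).1

end Weight

section Extension

variable {V C ι : Type*} {G : SimpleGraph V} {P : Set V}

theorem exists_coloring_extending (d : (G.induce P).Coloring C) (c : G.Coloring ι)
    {L : ι → Set C} (hL : Pairwise (Disjoint on L))
    (hfree : ∀ v ∉ P, ∃ a ∈ L (c v), ∀ x : P, G.Adj v x → d x ≠ a) :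
    ∃ f : G.Coloring C, ∀ x : P, f x = d x := by
  classical
  choose g hgL hgd using hfree
  refine ⟨.mk (fun v ↦ if h : v ∈ P then d ⟨v, h⟩ else g v h) fun {u v} huv ↦ ?_,
    fun x ↦ dif_pos x.2⟩
  by_cases hu : u ∈ P <;> by_cases hv : v ∈ P <;>
    simp only [hu, hv, dif_pos, dif_neg, not_false_eq_true]
  · exact d.valid huv
  · exact hgd v hv ⟨u, hu⟩ huv.symm
  · exact (hgd u hu ⟨v, hv⟩ huv).symm
  · exact (hL (c.valid huv)).ne_of_mem (hgL u hu) (hgL v hv)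

theorem pairwise_disjoint_pairs {e : ι ⊕ ι → C} (he : Injective e) :
    Pairwise (Disjoint on fun i ↦ ({e (.inl i), e (.inr i)} : Set C)) := by
  intro i j hij
  simp [onFun, he.eq_iff, hij.symm]

/-- The pairs of vertices of `P` at distance at most two that `d` colours with the pair `p`. -/
def closePairs (G : SimpleGraph V) (d : P → C) (p : Sym2 C) : Set (Sym2 P) :=
  {q | q.map (↑) ∈ pairsAtMost G P 2 ∧ q.map d = p}

theorem finite_closePairs {d : P → C} (hfin : (pairsAtMost G P 2).Finite) (p : Sym2 C) :
    (closePairs G d p).Finite :=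
  (hfin.preimage (Sym2.map.injective Subtype.val_injective).injOn).subset fun _ hq ↦ hq.1

theorem sum_ncard_closePairs_le [Fintype C] {d : P → C} (hfin : (pairsAtMost G P 2).Finite) :
    ∑ p, (closePairs G d p).ncard ≤ (pairsAtMost G P 2).ncard := by
  classical
  have hinj : Injective (Sym2.map ((↑) : P → V)) := Sym2.map.injective Subtype.val_injective
  have hpre := hfin.preimage hinj.injOn
  calc ∑ p, (closePairs G d p).ncard = ∑ p, #{q ∈ hpre.toFinset | q.map d = p} := by
        refine sum_congr rfl fun p _ ↦ ?_
        rw [← Set.ncard_coe_finset]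
        congr 1
        ext q
        simp [closePairs]
    _ = #hpre.toFinset := (card_eq_sum_card_fiberwise fun _ _ ↦ mem_coe.2 (mem_univ _)).symm
    _ ≤ (pairsAtMost G P 2).ncard := by
        rw [← Set.ncard_eq_toFinset_card _ hpre]
        exact Set.ncard_le_ncard_of_injOn _ (fun _ hq ↦ hq) hinj.injOn hfin

theorem mem_closePairs_of_adj {d : P → C} {v : V} {x y : P} (hvx : G.Adj v x) (hvy : G.Adj v y)
    (hxy : x ≠ y) : s(x, y) ∈ closePairs G d s(d x, d y) :=
  ⟨⟨x, y, rfl, x.2, y.2, Subtype.coe_ne_coe.2 hxy, .cons hvx.symm (.cons hvy .nil), le_rfl⟩, rfl⟩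

theorem exists_free_color_or_mem_closePairs (d : P → C) {a b : C} (hab : a ≠ b) (v : V) :
    (∃ t ∈ ({a, b} : Set C), ∀ x : P, G.Adj v x → d x ≠ t) ∨
      ∃ x y : P, G.Adj v x ∧ G.Adj v y ∧ s(x, y) ∈ closePairs G d s(a, b) := by
  by_contra! ⟨hseen, hfar⟩
  obtain ⟨x, hvx, rfl⟩ := hseen a (by simp)
  obtain ⟨y, hvy, rfl⟩ := hseen b (by simp)
  exact hfar x y hvx hvy (mem_closePairs_of_adj hvx hvy fun h ↦ hab (congrArg d h))

theorem exists_coloring_meeting_subsingleton (c : G.Coloring ι) (i₀ : ι) {Q : Set (Sym2 P)}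
    (hQ : Q.Subsingleton) : ∃ c' : G.Coloring ι, ∀ q ∈ Q, ∃ x ∈ q, c' x = i₀ := by
  classical
  rcases hQ.eq_empty_or_singleton with rfl | ⟨⟨x, y⟩, rfl⟩
  · exact ⟨c, by simp⟩
  · exact ⟨G.recolorOfEquiv (Equiv.swap (c x) i₀) c, by
      rintro _ rfl
      exact ⟨x, Sym2.mem_mk_left x y, Equiv.swap_apply_left _ _⟩⟩

theorem exists_coloring_extending_of_pairs (d : (G.induce P).Coloring C) (c : G.Coloring ι)
    {e : ι ⊕ ι → C} (he : Injective e) {i₀ : ι}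
    (hempty : ∀ i ≠ i₀, closePairs G d s(e (.inl i), e (.inr i)) = ∅)
    (hsub : (closePairs G d s(e (.inl i₀), e (.inr i₀))).Subsingleton) :
    ∃ f : G.Coloring C, ∀ x : P, f x = d x := by
  obtain ⟨c', hc'⟩ := exists_coloring_meeting_subsingleton c i₀ hsub
  refine exists_coloring_extending d c' (pairwise_disjoint_pairs he) fun v _ ↦
    (exists_free_color_or_mem_closePairs d (he.ne Sum.inl_ne_inr) v).resolve_right ?_
  rintro ⟨x, y, hvx, hvy, hxy⟩
  by_cases hv : c' v = i₀
  · rw [hv] at hxy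
    obtain ⟨z, hz, hcz⟩ := hc' _ hxy
    have hvz : G.Adj v z := by rcases Sym2.mem_iff.1 hz with rfl | rfl <;> assumption
    exact c'.valid hvz (hv.trans hcz.symm)
  · simp [hempty _ hv] at hxy

theorem stmt_19_general {r k : ℕ} [Fintype C] (hk : r < k) (hk2 : 3 * r < 2 * k + 7)
    (hC : Fintype.card C = r + k) (hG : G.Colorable r) (d : (G.induce P).Coloring C)
    (hfin : (pairsAtMost G P 2).Finite)
    (hD : 2 * (pairsAtMost G P 2).ncard <
      min ((k + 1) * (k + 2)) (2 * ((k - r + 2) * (k + r - 1)))) :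
    ∃ f : G.Coloring C, ∀ x : P, f x = d x := by
  cases r with
  | zero =>
    have := hG.isEmpty
    exact ⟨.ofIsEmpty, isEmptyElim⟩
  | succ m =>
    have hsum := sum_ncard_closePairs_le (d := d) hfin
    obtain ⟨e, he, hzero, hone⟩ :=
      exists_injective_pairs_weight_le_one (W := fun p ↦ (closePairs G d p).ncard)
        hk hk2 hC (lt_of_le_of_lt (by omega) hD)
    exact exists_coloring_extending_of_pairs d hG.some he
      (fun i hi ↦ (Set.ncard_eq_zero (finite_closePairs hfin _)).1 (hzero i hi))
      (fun _ hp _ hq ↦ (Set.ncard_le_one (finite_closePairs hfin _)).1 hone _ hp _ hq)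

end Extension

/-- k > r ≥ 2, k > (3r-7)/2 and
|D_G(P,2)| < min{(k+1)(k+2)/2, (k-r+2)(k+r-1)} (stated scaled by 2): any
(r+k)-precoloring of P extends to an (r+k)-coloring of G. -/
theorem stmt_19 {V : Type*} [Fintype V] (r k : ℕ) (hr : 2 ≤ r) (hk : r < k)
    (hk2 : 3 * r < 2 * k + 7)
    (G : SimpleGraph V) (hχ : G.chromaticNumber ≤ r) (P : Set V)
    (d : V → ℕ) (hd : ∀ x ∈ P, ∀ y ∈ P, G.Adj x y → d x ≠ d y)
    (hdr : ∀ x ∈ P, d x ∈ Finset.Icc 1 (r + k))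
    (hD : 2 * (pairsAtMost G P 2).ncard <
      min ((k + 1) * (k + 2)) (2 * ((k - r + 2) * (k + r - 1)))) :
    ∃ f : V → ℕ, (∀ u v, G.Adj u v → f u ≠ f v) ∧
      (∀ v, f v ∈ Finset.Icc 1 (r + k)) ∧ ∀ x ∈ P, f x = d x := by
  let d' : (G.induce P).Coloring (Icc 1 (r + k)) :=
    .mk (fun x ↦ ⟨d x, hdr x x.2⟩) fun {x y} hxy h ↦ hd x x.2 y y.2 hxy (congrArg Subtype.val h)
  obtain ⟨f, hf⟩ := stmt_19_general hk hk2 (by simp)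
    (SimpleGraph.chromaticNumber_le_iff_colorable.1 hχ) d' (Set.toFinite _) hD
  exact ⟨fun v ↦ f v, fun u v huv h ↦ f.valid huv (Subtype.ext h), fun v ↦ (f v).2,
    fun x hx ↦ congrArg Subtype.val (hf ⟨x, hx⟩)⟩
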